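/- arXiv:2206.06188 — 3 statements merged into one kernel-verified Lean document; each statement's English description precedes it below -/
import Mathlib

section
/- Let K ⊂ ℝⁿ be a convex body with 0 ∈ int K and v ∈ int K. If r > 0 is such that v + [-r,r]ⁿ ⊂ int K, then ∫_{ℝⁿ} e^{-2⟨x,v⟩} / (|K| e^{\tilde{h}_K(-2x)}) dx ≤ (π²/(8r²))ⁿ, where \tilde{h}_K(x) = log((1/|K|)∫_K e^{⟨x,y⟩} dy). -/
/-!
Write `I(x) = ∫_K e^{-2⟨x,y⟩} dy`, so that the integrand is `e^{-2⟨x,v⟩} / I(x)`. Since the integrand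
of `I` is positive and `K` contains the cube `v + [-r,r]ⁿ`, the integral over that cube is a lower
bound for `I(x)`, and it factorizes as `e^{-2⟨x,v⟩} ∏ᵢ ∫_{-r}^r e^{-2 xᵢ s} ds`
(`cube_integral`). Hence the integrand is at most the tensor product `∏ᵢ w(xᵢ)` with
`w(t) = (∫_{-r}^r e^{-2ts} ds)⁻¹`, which is `t / sinh (2rt)` for `t ≠ 0`, and by Fubini it remains to
see that `∫_ℝ w = π² / (8r²)` (`lintegral_cubeWeight`). This follows by integrating the geometric expansion
`t / sinh (ct) = 2 ∑ₖ |t| e^{-(2k+1)c|t|}` term by term and using `∑ₖ (2k+1)⁻² = π²/8`, a consequence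
of `ζ(2) = π²/6`.
-/

open MeasureTheory
open scoped InnerProductSpace

/-- `tildeh K x = log ((1/|K|) ∫_K e^{⟨x,y⟩} dy)`. -/
noncomputable def tildeh (n : ℕ) (K : Set (EuclideanSpace ℝ (Fin n)))
    (x : EuclideanSpace ℝ (Fin n)) : ℝ :=
  Real.log (((volume K).toReal)⁻¹ * ∫ y in K, Real.exp ⟪x, y⟫_ℝ)

/-- The weight `(∫_{-r}^r e^{-2ts} ds)⁻¹`, equal to `t / sinh (2rt)` for `t ≠ 0` and to `1 / (2r)` at
`t = 0`. -/
noncomputable def cubeWeight (r t : ℝ) : ℝ := (∫ s in (-r)..r, Real.exp (-(2 * (t * s))))⁻¹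

lemma cubeWeight_pos {r : ℝ} (hr : 0 < r) (t : ℝ) : 0 < cubeWeight r t := by
  refine inv_pos.mpr (intervalIntegral.intervalIntegral_pos_of_pos ?_ (fun _ => Real.exp_pos _)
    (by linarith))
  exact Continuous.intervalIntegrable (by fun_prop) _ _

lemma cubeWeight_eq (r : ℝ) {t : ℝ} (ht : t ≠ 0) :
    cubeWeight r t = t / Real.sinh (2 * r * t) := by
  have h : ∫ s in (-r)..r, Real.exp (-(2 * (t * s))) = Real.sinh (2 * r * t) / t := by
    have h1 : ∀ s, -(2 * (t * s)) = (-(2 * t)) * s := fun s => by ring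
    simp_rw [h1]
    rw [intervalIntegral.integral_comp_mul_left (fun u => Real.exp u)
      (neg_ne_zero.mpr (mul_ne_zero two_ne_zero ht)), integral_exp, Real.sinh_eq, smul_eq_mul]
    have e1 : -(2 * t) * r = -(2 * r * t) := by ring
    have e2 : -(2 * t) * -r = 2 * r * t := by ring
    rw [e1, e2]
    field_simp
    ring
  rw [cubeWeight, h, inv_div]

lemma hasSum_odd_inv_sq :
    HasSum (fun k : ℕ => 1 / (2 * (k : ℝ) + 1) ^ 2) (Real.pi ^ 2 / 8) := by
  have h := hasSum_zeta_two
  have he : HasSum (fun k : ℕ => 1 / ((2 * k : ℕ) : ℝ) ^ 2) (Real.pi ^ 2 / 24) := by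
    have := h.mul_left (1 / 4)
    rw [show 1 / 4 * (Real.pi ^ 2 / 6) = Real.pi ^ 2 / 24 by ring] at this
    refine (congrArg (HasSum · _) (funext fun k => ?_)).mpr this
    push_cast
    rw [mul_pow, one_div_mul_one_div]
    norm_num
  have ho : Summable (fun k : ℕ => 1 / ((2 * k + 1 : ℕ) : ℝ) ^ 2) :=
    h.summable.comp_injective (i := fun k : ℕ => 2 * k + 1) (fun a b hab => by simpa using hab)
  have hs := (HasSum.even_add_odd (f := fun k : ℕ => 1 / (k : ℝ) ^ 2) he ho.hasSum).unique h
  have := ho.hasSum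
  have e : ∑' k : ℕ, 1 / ((2 * k + 1 : ℕ) : ℝ) ^ 2 = Real.pi ^ 2 / 8 := by linarith
  rw [e] at this
  simpa using this

lemma lintegral_abs_mul_exp {a : ℝ} (ha : 0 < a) :
    ∫⁻ t : ℝ, ENNReal.ofReal (2 * (|t| * Real.exp (-(a * |t|)))) = ENNReal.ofReal (4 / a ^ 2) := by
  have h1 : ∫ t in Set.Ioi (0 : ℝ), 2 * (t * Real.exp (-(a * t))) = 2 / a ^ 2 := by
    have := Real.integral_rpow_mul_exp_neg_mul_Ioi (a := 2) (r := a) two_pos ha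
    rw [Real.Gamma_two] at this
    norm_num at this
    rw [integral_const_mul, this]
    ring
  have h2 : ∫ t : ℝ, 2 * (|t| * Real.exp (-(a * |t|))) = 4 / a ^ 2 := by
    rw [integral_comp_abs (f := fun t => 2 * (t * Real.exp (-(a * t)))), h1]
    ring
  rw [← h2, ofReal_integral_eq_lintegral_ofReal]
  · exact Integrable.of_integral_ne_zero (by rw [h2]; positivity)
  · exact Filter.Eventually.of_forall fun t => by positivity

/-- The geometric expansion of `1 / sinh`. -/
lemma hasSum_div_sinh {c t : ℝ} (hc : 0 < c) (ht : t ≠ 0) :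
    HasSum (fun k : ℕ => 2 * (|t| * Real.exp (-((2 * (k : ℝ) + 1) * c * |t|))))
      (t / Real.sinh (c * t)) := by
  have ht' : 0 < |t| := abs_pos.mpr ht
  have habs : t / Real.sinh (c * t) = |t| / Real.sinh (c * |t|) := by
    rcases abs_choice t with h | h <;> rw [h]
    rw [mul_neg, Real.sinh_neg, neg_div_neg_eq]
  rw [habs]
  generalize |t| = u at ht'
  have hcu : 0 < c * u := mul_pos hc ht'
  have hq : Real.exp (-(2 * (c * u))) < 1 := Real.exp_lt_one_iff.mpr (by linarith)
  have hg := (hasSum_geometric_of_lt_one (Real.exp_pos _).le hq).mul_left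
    (2 * (u * Real.exp (-(c * u))))
  have hsum : 2 * (u * Real.exp (-(c * u))) * (1 - Real.exp (-(2 * (c * u))))⁻¹ =
      u / Real.sinh (c * u) := by
    have e1 : Real.exp (-(2 * (c * u))) = Real.exp (-(c * u)) * Real.exp (-(c * u)) := by
      rw [← Real.exp_add]; ring_nf
    have hs : Real.sinh (c * u) ≠ 0 := (Real.sinh_pos_iff.mpr hcu).ne'
    have h1 : 1 - Real.exp (-(2 * (c * u))) ≠ 0 := by linarith
    have e2 : Real.exp (c * u) * Real.exp (-(c * u)) = 1 := by
      rw [← Real.exp_add, add_neg_cancel, Real.exp_zero]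
    rw [← div_eq_mul_inv, div_eq_div_iff h1 hs, e1, Real.sinh_eq]
    linear_combination u * e2
  rw [hsum] at hg
  refine (congrArg (HasSum · _) (funext fun k => ?_)).mpr hg
  rw [← Real.exp_nat_mul, mul_assoc 2, mul_assoc u, ← Real.exp_add]
  congr 3
  ring

lemma lintegral_cubeWeight {r : ℝ} (hr : 0 < r) :
    ∫⁻ t, ENNReal.ofReal (cubeWeight r t) = ENNReal.ofReal (Real.pi ^ 2 / (8 * r ^ 2)) := by
  have hc : 0 < 2 * r := by linarith
  have h : ∀ᵐ t : ℝ, ENNReal.ofReal (cubeWeight r t) =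
      ∑' k : ℕ, ENNReal.ofReal (2 * (|t| * Real.exp (-((2 * (k : ℝ) + 1) * (2 * r) * |t|)))) := by
    filter_upwards [volume.ae_ne (0 : ℝ)] with t ht
    have hs := hasSum_div_sinh hc ht
    rw [cubeWeight_eq r ht, ← hs.tsum_eq,
      ENNReal.ofReal_tsum_of_nonneg (fun k => by positivity) hs.summable]
  have hsum := hasSum_odd_inv_sq.mul_left (1 / r ^ 2)
  have hterm : ∀ k : ℕ, 1 / r ^ 2 * (1 / (2 * (k : ℝ) + 1) ^ 2) =
      4 / ((2 * (k : ℝ) + 1) * (2 * r)) ^ 2 := fun k => by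
    field_simp
    norm_num
  simp_rw [hterm] at hsum
  rw [lintegral_congr_ae h, lintegral_tsum (fun k => by fun_prop)]
  simp_rw [fun k : ℕ => lintegral_abs_mul_exp (a := (2 * (k : ℝ) + 1) * (2 * r)) (by positivity)]
  rw [← ENNReal.ofReal_tsum_of_nonneg (fun k => by positivity) hsum.summable, hsum.tsum_eq]
  congr 1
  field_simp

lemma integrable_cubeWeight {r : ℝ} (hr : 0 < r) : Integrable (cubeWeight r) := by
  have hm : AEStronglyMeasurable (cubeWeight r) := by
    have : Measurable fun t : ℝ => t / Real.sinh (2 * r * t) :=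
      measurable_id.div (Real.continuous_sinh.measurable.comp (measurable_const_mul _))
    refine this.aestronglyMeasurable.congr ?_
    filter_upwards [volume.ae_ne (0 : ℝ)] with t ht using (cubeWeight_eq r ht).symm
  refine (lintegral_ofReal_ne_top_iff_integrable hm
    (Filter.Eventually.of_forall fun t => (cubeWeight_pos hr t).le)).mp ?_
  rw [lintegral_cubeWeight hr]
  exact ENNReal.ofReal_ne_top

lemma lintegral_prod_cubeWeight (n : ℕ) {r : ℝ} (hr : 0 < r) :
    ∫⁻ x : Fin n → ℝ, ENNReal.ofReal (∏ i, cubeWeight r (x i)) =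
      ENNReal.ofReal ((Real.pi ^ 2 / (8 * r ^ 2)) ^ n) := by
  have hw := integrable_cubeWeight hr
  have h1 : ∫ t, cubeWeight r t = Real.pi ^ 2 / (8 * r ^ 2) := by
    rw [integral_eq_lintegral_of_nonneg_ae
      (Filter.Eventually.of_forall fun t => (cubeWeight_pos hr t).le) hw.1,
      lintegral_cubeWeight hr, ENNReal.toReal_ofReal (by positivity)]
  rw [← ofReal_integral_eq_lintegral_ofReal]
  · rw [integral_fintype_prod_volume_eq_prod (fun _ : Fin n => cubeWeight r)]
    rw [h1, Finset.prod_const, Finset.card_univ, Fintype.card_fin]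
  · exact Integrable.fintype_prod (f := fun _ : Fin n => cubeWeight r) fun _ => hw
  · exact Filter.Eventually.of_forall fun x =>
      Finset.prod_nonneg fun i _ => (cubeWeight_pos hr (x i)).le

lemma interval_integral_eq {r : ℝ} (hr : 0 < r) (t a : ℝ) :
    ∫ s in Set.Icc (a - r) (a + r), Real.exp (-(2 * (t * s))) =
      Real.exp (-(2 * (t * a))) * (cubeWeight r t)⁻¹ := by
  rw [integral_Icc_eq_integral_Ioc, ← intervalIntegral.integral_of_le (by linarith), cubeWeight,
    inv_inv, ← intervalIntegral.integral_const_mul]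
  have := intervalIntegral.integral_comp_add_right (a := -r) (b := r)
    (fun s => Real.exp (-(2 * (t * s)))) a
  rw [show a - r = -r + a by ring, show a + r = r + a by ring, ← this]
  congr 1
  funext s
  rw [← Real.exp_add]
  ring_nf

lemma exp_inner_eq {n : ℕ} (x y : EuclideanSpace ℝ (Fin n)) :
    Real.exp (-(2 * ⟪x, y⟫_ℝ)) = ∏ i, Real.exp (-(2 * (x i * y i))) := by
  rw [← Real.exp_sum, PiLp.inner_apply, Finset.sum_neg_distrib, Finset.mul_sum]
  simp [mul_comm]

lemma cube_integral {n : ℕ} (x v : EuclideanSpace ℝ (Fin n)) {r : ℝ} (hr : 0 < r) :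
    ∫ y in {y : EuclideanSpace ℝ (Fin n) | ∀ i, |y i - v i| ≤ r}, Real.exp (-(2 * ⟪x, y⟫_ℝ)) =
      Real.exp (-(2 * ⟪x, v⟫_ℝ)) * (∏ i, cubeWeight r (x i))⁻¹ := by
  have hset : {y : EuclideanSpace ℝ (Fin n) | ∀ i, |y i - v i| ≤ r} =
      (MeasurableEquiv.toLp 2 (Fin n → ℝ)).symm ⁻¹'
        (Set.univ.pi fun i => Set.Icc (v i - r) (v i + r)) := by
    ext y
    simp only [Set.mem_ofPred_eq, Set.mem_preimage, Set.mem_univ_pi, Set.mem_Icc, abs_le]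
    refine forall_congr' fun i => ?_
    change _ ↔ v i - r ≤ y i ∧ y i ≤ v i + r
    constructor <;> rintro ⟨h1, h2⟩ <;> constructor <;> linarith
  rw [hset]
  simp_rw [exp_inner_eq]
  have := (EuclideanSpace.volume_preserving_symm_measurableEquiv_toLp (Fin n)).setIntegral_preimage_emb
    (MeasurableEquiv.measurableEmbedding _)
    (fun y : Fin n → ℝ => ∏ i, Real.exp (-(2 * (x i * y i))))
    (Set.univ.pi fun i => Set.Icc (v i - r) (v i + r))
  refine this.trans ?_
  rw [volume_pi, Measure.restrict_pi_pi,
    integral_fintype_prod_eq_prod (fun (i : Fin n) (s : ℝ) => Real.exp (-(2 * (x i * s))))]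
  simp_rw [interval_integral_eq hr]
  rw [Finset.prod_mul_distrib, Finset.prod_inv_distrib]

/-- The logarithm and the normalization by `|K|` in `tildeh` cancel; the interior point of `K` and the
compactness of `K` ensure that volume and integral are positive and finite. -/
lemma volume_mul_exp_tildeh {n : ℕ} {K : Set (EuclideanSpace ℝ (Fin n))} (hK : IsCompact K)
    (h0 : 0 ∈ interior K) (x : EuclideanSpace ℝ (Fin n)) :
    (volume K).toReal * Real.exp (tildeh n K x) = ∫ y in K, Real.exp ⟪x, y⟫_ℝ := by
  have hV0 : volume K ≠ 0 :=
    (Measure.measure_pos_of_nonempty_interior volume ⟨0, h0⟩).ne'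
  have hV : 0 < (volume K).toReal := ENNReal.toReal_pos hV0 hK.measure_lt_top.ne
  have hI : 0 < ∫ y in K, Real.exp ⟪x, y⟫_ℝ := by
    have : NeZero (volume.restrict K) := ⟨by rwa [Ne, Measure.restrict_eq_zero]⟩
    exact integral_exp_pos
      (ContinuousOn.integrableOn_compact hK (by fun_prop))
  rw [tildeh, Real.exp_log (by positivity), mul_inv_cancel_left₀ hV.ne']

/-- Shrinking `K` to the cube `v + [-r,r]ⁿ` bounds the integrand by a product of one-variable
weights, in which `v` no longer appears. -/
lemma weight_le {n : ℕ} {K : Set (EuclideanSpace ℝ (Fin n))} (hK : IsCompact K)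
    (h0 : 0 ∈ interior K) (v : EuclideanSpace ℝ (Fin n)) {r : ℝ} (hr : 0 < r)
    (hcube : {y : EuclideanSpace ℝ (Fin n) | ∀ i, |y i - v i| ≤ r} ⊆ interior K)
    (x : EuclideanSpace ℝ (Fin n)) :
    Real.exp (-(2 * ⟪x, v⟫_ℝ)) /
      ((volume K).toReal * Real.exp (tildeh n K ((-2 : ℝ) • x))) ≤ ∏ i, cubeWeight r (x i) := by
  have hW : 0 < ∏ i, cubeWeight r (x i) := Finset.prod_pos fun i _ => cubeWeight_pos hr (x i)
  rw [volume_mul_exp_tildeh hK h0]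
  have e : ∀ y, ⟪(-2 : ℝ) • x, y⟫_ℝ = -(2 * ⟪x, y⟫_ℝ) := fun y => by
    rw [real_inner_smul_left]; ring
  simp_rw [e]
  have hle : Real.exp (-(2 * ⟪x, v⟫_ℝ)) * (∏ i, cubeWeight r (x i))⁻¹ ≤
      ∫ y in K, Real.exp (-(2 * ⟪x, y⟫_ℝ)) := by
    rw [← cube_integral x v hr]
    refine setIntegral_mono_set (ContinuousOn.integrableOn_compact hK (by fun_prop))
      (Filter.Eventually.of_forall fun y => (Real.exp_pos _).le)
      (LE.le.eventuallyLE (hcube.trans interior_subset))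
  have hpos : 0 < Real.exp (-(2 * ⟪x, v⟫_ℝ)) * (∏ i, cubeWeight r (x i))⁻¹ := by positivity
  rw [div_le_iff₀ (hpos.trans_le hle), ← div_le_iff₀' hW, div_eq_mul_inv]
  exact hle

theorem lintegral_weight_le (n : ℕ) (K : Set (EuclideanSpace ℝ (Fin n)))
    (hKcomp : IsCompact K) (hKconv : Convex ℝ K) (h0 : 0 ∈ interior K)
    (v : EuclideanSpace ℝ (Fin n)) (hv : v ∈ interior K) (r : ℝ) (hr : 0 < r)
    (hcube : {y : EuclideanSpace ℝ (Fin n) | ∀ i, |y i - v i| ≤ r} ⊆ interior K) :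
    ∫⁻ x, ENNReal.ofReal
        (Real.exp (-(2 * ⟪x, v⟫_ℝ)) /
          ((volume K).toReal * Real.exp (tildeh n K ((-2 : ℝ) • x))))
      ≤ ENNReal.ofReal ((Real.pi ^ 2 / (8 * r ^ 2)) ^ n) := by
  rw [← lintegral_prod_cubeWeight n hr,
    (EuclideanSpace.volume_preserving_symm_measurableEquiv_toLp (Fin n)).lintegral_map_equiv]
  exact lintegral_mono fun x => ENNReal.ofReal_le_ofReal (weight_le hKcomp h0 v hr hcube x)
end

section
/- Let K ⊂ ℝⁿ be a convex body with barycenter at the origin. Then there exist A ∈ GL(n,ℝ), r > 0, and a ∈ AK such that B(a,r) ⊂ AK ⊂ B(0, 2nr) and (AK)° ⊂ B(0, 2n/r), where B(c,ρ) denotes the Euclidean ball of center c and radius ρ. -/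
/-!
The affine map `A` comes from John's theorem. Among all affine images `T B + c` of the unit ball
`B` contained in `K`, one maximises `|det T|` by compactness; put `A = T⁻¹` and `a = A c`. Then
`B(a, 1) ⊆ A K`, and `A K ⊆ B(a, n)`: a point of `A K` at distance `d > n` from `a` would make the
convex hull of the ball and this point contain an ellipsoid of larger volume, obtained by moving
the centre by `s` towards the point, stretching by `1 + s` in that direction and shrinking by
`β = √(1 - 2 s / (d - 1))` in the orthogonal ones (`ellipsoid_mem`, `exists_perturbation`). Since
the barycenter `0` lies in `A K`, one has `‖a‖ ≤ n`, hence `A K ⊆ B(0, 2n)`, and `r = 1` works.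

The bound on the polar body uses the barycenter quantitatively (`neg_finrank_le_of_le_one`): a
linear functional which is at most `1` on `K` is at least `-n` on `K`. This follows by
comparing the integral of `1 - f` over `K` with the one over the smaller copy
`x₀ + t (K - x₀)`, and letting `t → 1`. If `y` is in the polar of `A K`, applying this at the point
`a - y / ‖y‖`, and `⟪x, y⟫ ≤ 1` at `a + y / ‖y‖`, gives `2 ‖y‖ ≤ n + 1 ≤ 4 n`.
-/

open MeasureTheory
open scoped InnerProductSpace

/-- barycenter of a set with respect to Lebesgue measure. -/
noncomputable def barycenter (n : ℕ) (S : Set (EuclideanSpace ℝ (Fin n))) :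
    EuclideanSpace ℝ (Fin n) :=
  ((volume S).toReal)⁻¹ • ∫ x in S, x

open Filter Topology Module

/-! ### Linear functionals on a convex body with barycenter at the origin -/

section Barycenter

variable {E : Type*} [NormedAddCommGroup E] [NormedSpace ℝ E] [FiniteDimensional ℝ E]
  [MeasurableSpace E] [BorelSpace E]

/-- Comparison of the integral of `1 - f` over `K` with the one over its image under the homothety
of ratio `t` and centre `x₀`. -/
lemma homothety_comparison (μ : Measure E) [μ.IsAddHaarMeasure] {K : Set E} (hK : IsCompact K)
    (hKc : Convex ℝ K) (hμ : 0 < μ.real K) (hb : ∫ x in K, x ∂μ = 0) (f : E →L[ℝ] ℝ)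
    (hf : ∀ x ∈ K, f x ≤ 1) {x₀ : E} (hx₀ : x₀ ∈ K) {t : ℝ} (ht : 0 < t) (ht1 : t < 1) :
    t ^ finrank ℝ E * (1 - (1 - t) * f x₀) ≤ 1 := by
  set φ : E → E := fun x => (1 - t) • x₀ + t • x with hφ
  have hsub : φ '' K ⊆ K := by
    rintro _ ⟨x, hx, rfl⟩
    exact hKc hx₀ hx (by linarith) ht.le (by ring)
  have hder : ∀ x ∈ K, HasFDerivWithinAt φ (t • ContinuousLinearMap.id ℝ E) K x := fun x _ =>
    (((hasFDerivAt_id x).const_smul t).const_add _).hasFDerivWithinAt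
  have hinj : Set.InjOn φ K := by
    intro x _ y _ hxy
    simpa [hφ, ht.ne'] using hxy
  have hdet : |(t • ContinuousLinearMap.id ℝ E).det| = t ^ finrank ℝ E := by
    have : (t • ContinuousLinearMap.id ℝ E).det = t ^ finrank ℝ E := by
      simp [ContinuousLinearMap.det]
    rw [this, abs_of_pos (by positivity)]
  have hcv := integral_image_eq_integral_abs_det_fderiv_smul μ hK.measurableSet hder hinj
    (fun x => 1 - f x)
  have hint : ∀ c : ℝ, IntegrableOn (fun _ : E => c) K μ := fun c =>
    continuousOn_const.integrableOn_compact hK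
  have hintf : IntegrableOn (fun x => f x) K μ := f.continuous.continuousOn.integrableOn_compact hK
  have hf0 : ∫ x in K, f x ∂μ = 0 := by
    rw [f.integral_comp_comm (φ := fun x => x) (continuousOn_id.integrableOn_compact hK), hb,
      map_zero]
  have h1 : ∫ x in K, (1 - f x) ∂μ = μ.real K := by
    rw [integral_sub (hint 1) hintf, hf0]; simp
  have h2 : ∫ x in K, (1 - f (φ x)) ∂μ = μ.real K * (1 - (1 - t) * f x₀) := by
    have : ∀ x, 1 - f (φ x) = (1 - (1 - t) * f x₀) - t * f x := by
      intro x; simp [hφ]; ring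
    simp_rw [this]
    rw [integral_sub (hint _) (hintf.const_mul t), integral_const_mul, hf0]
    simp
  have hle : ∫ x in φ '' K, (1 - f x) ∂μ ≤ ∫ x in K, (1 - f x) ∂μ := by
    refine setIntegral_mono_set ((hint 1).sub hintf) ?_ hsub.eventuallyLE
    filter_upwards [ae_restrict_mem hK.measurableSet] with x hx
    simpa using hf x hx
  rw [hcv, hdet, h1] at hle
  simp_rw [smul_eq_mul] at hle
  rw [integral_const_mul, h2] at hle
  nlinarith

/-- A linear functional that is at most `1` on a convex body with barycenter at the origin is at
least minus the dimension there. -/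
lemma neg_finrank_le_of_le_one (μ : Measure E) [μ.IsAddHaarMeasure] {K : Set E} (hK : IsCompact K)
    (hKc : Convex ℝ K) (hμ : 0 < μ.real K) (hb : ∫ x in K, x ∂μ = 0) (f : E →L[ℝ] ℝ)
    (hf : ∀ x ∈ K, f x ≤ 1) {x₀ : E} (hx₀ : x₀ ∈ K) : -(finrank ℝ E : ℝ) ≤ f x₀ := by
  set n := finrank ℝ E
  -- Dividing the comparison by `1 - t` turns `1 - t ^ n` into a geometric sum.
  have key : ∀ t ∈ Set.Ioo (0 : ℝ) 1, -(t ^ n * f x₀) ≤ ∑ i ∈ Finset.range n, t ^ i := by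
    rintro t ⟨ht, ht1⟩
    have h := homothety_comparison μ hK hKc hμ hb f hf hx₀ ht ht1
    have hg := geom_sum_mul t n
    have : (-(t ^ n * f x₀)) * (1 - t) ≤ (∑ i ∈ Finset.range n, t ^ i) * (1 - t) := by
      linear_combination h + hg
    exact le_of_mul_le_mul_right this (by linarith)
  have hl : Tendsto (fun t : ℝ => -(t ^ n * f x₀)) (𝓝[<] 1) (𝓝 (-(1 ^ n * f x₀))) :=
    ((by fun_prop : Continuous fun t : ℝ => -(t ^ n * f x₀)).tendsto 1).mono_left
      nhdsWithin_le_nhds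
  have hr : Tendsto (fun t : ℝ => ∑ i ∈ Finset.range n, t ^ i) (𝓝[<] 1)
      (𝓝 (∑ i ∈ Finset.range n, (1 : ℝ) ^ i)) :=
    ((by fun_prop : Continuous fun t : ℝ => ∑ i ∈ Finset.range n, t ^ i).tendsto 1).mono_left
      nhdsWithin_le_nhds
  have := le_of_tendsto_of_tendsto hl hr
    (Filter.mem_of_superset (Ioo_mem_nhdsLT (by norm_num : (0 : ℝ) < 1)) key)
  simp at this
  linarith

end Barycenter

/-! ### John's theorem -/

section John

variable {E : Type*} [NormedAddCommGroup E] [InnerProductSpace ℝ E]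

/-- The linear map multiplying by `1 + s` along the unit vector `e` and by `β` on its orthogonal
complement. -/
noncomputable def stretch (e : E) (s β : ℝ) : E →L[ℝ] E :=
  β • ContinuousLinearMap.id ℝ E + (1 + s - β) • (innerSL ℝ e).smulRight e

lemma stretch_apply (e : E) (s β : ℝ) (v : E) :
    stretch e s β v = β • v + ((1 + s - β) * ⟪e, v⟫_ℝ) • e := by
  simp [stretch, mul_smul]

lemma norm_stretch_sq {e : E} (he : ‖e‖ = 1) (s β : ℝ) (u : E) :
    ‖stretch e s β u‖ ^ 2 = β ^ 2 * ‖u‖ ^ 2 + ((1 + s) ^ 2 - β ^ 2) * ⟪e, u⟫_ℝ ^ 2 := by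
  rw [stretch_apply, norm_add_sq_real, norm_smul, norm_smul, he, inner_smul_left, inner_smul_right,
    real_inner_comm, mul_pow, mul_pow]
  simp only [Real.norm_eq_abs, sq_abs, conj_trivial]
  ring

lemma inner_stretch (e : E) (s β : ℝ) (u v : E) :
    ⟪u, stretch e s β v⟫_ℝ = ⟪stretch e s β u, v⟫_ℝ := by
  simp only [stretch_apply, inner_add_left, inner_add_right, inner_smul_left, inner_smul_right,
    conj_trivial]
  rw [real_inner_comm u e]
  ring

lemma det_stretch [FiniteDimensional ℝ E] {e : E} (he : ‖e‖ = 1) (s : ℝ) {β : ℝ} (hβ : β ≠ 0) :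
    (stretch e s β).det * β = β ^ finrank ℝ E * (1 + s) := by
  have h : ((stretch e s β : E →L[ℝ] E) : E →ₗ[ℝ] E) =
      β • LinearMap.transvection (((1 + s - β) / β) • (innerSL ℝ e : E →ₗ[ℝ] ℝ)) e := by
    ext v
    simp only [ContinuousLinearMap.coe_coe, stretch_apply, LinearMap.smul_apply,
      LinearMap.transvection.apply, smul_add, smul_smul]
    simp
    congr 1
    field_simp
  rw [ContinuousLinearMap.det, h, LinearMap.det_smul, LinearMap.transvection.det]
  simp [he]
  field_simp
  ring

/-- The support function of the ellipsoid with centre `s e` and semi-axes `1 + s` along `e`, `β`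
across, is at most that of the convex hull of the unit ball and `d e`. Here `ν = ‖u‖`,
`x = ⟪e, u⟫` and `N` is the norm of the image of `u` under the stretching map. -/
lemma support_le {ν x s d β N y : ℝ} (hx : |x| ≤ ν) (hs : 0 ≤ s) (hs1 : s ≤ 1) (hd : 1 < d)
    (hβ : β ^ 2 = 1 - 2 * s / (d - 1))
    (hN : N ^ 2 = β ^ 2 * ν ^ 2 + ((1 + s) ^ 2 - β ^ 2) * x ^ 2)
    (hν : ν < y) (hdx : d * x < y) : s * x + N < y := by
  have hxl := (abs_le.1 hx).1
  have hxr := (abs_le.1 hx).2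
  have hd1 : d - 1 ≠ 0 := by linarith
  have hν0 : 0 ≤ ν := (abs_nonneg x).trans hx
  rcases le_total (d * x) ν with h | h
  · have hid : (ν - s * x) ^ 2 - N ^ 2 = (ν + x) * (2 * s / (d - 1)) * (ν - d * x) := by
      rw [hN, hβ]; field_simp; ring
    have h0 : 0 ≤ (ν + x) * (2 * s / (d - 1)) * (ν - d * x) := by
      have : 0 < d - 1 := by linarith
      have := sub_nonneg.2 h
      have : 0 ≤ ν + x := by linarith
      positivity
    have : N ≤ ν - s * x := abs_le_of_sq_le_sq' (by linarith) (by nlinarith) |>.2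
    linarith
  · have hx0 : 0 ≤ x := by nlinarith
    have hsq : ν ^ 2 ≤ (d * x) ^ 2 := pow_le_pow_left₀ hν0 h 2
    have hid : (d * x - s * x) ^ 2 = β ^ 2 * (d * x) ^ 2 + ((1 + s) ^ 2 - β ^ 2) * x ^ 2 := by
      rw [hβ]; field_simp; ring
    have : N ≤ d * x - s * x :=
      abs_le_of_sq_le_sq' (by nlinarith [sq_nonneg β]) (by nlinarith) |>.2
    linarith

/-- The ellipsoid of `support_le` is contained in every closed convex set containing the unit ball
and `d e`. -/
lemma ellipsoid_mem [CompleteSpace E] {C : Set E} (hC : Convex ℝ C) (hCc : IsClosed C)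
    (hball : Metric.closedBall 0 1 ⊆ C) {e : E} (he : ‖e‖ = 1) {d s β : ℝ} (hde : d • e ∈ C)
    (hs : 0 ≤ s) (hs1 : s ≤ 1) (hd : 1 < d) (hβ : β ^ 2 = 1 - 2 * s / (d - 1)) {v : E}
    (hv : ‖v‖ ≤ 1) : stretch e s β v + s • e ∈ C := by
  by_contra hcon
  obtain ⟨f, y, hfC, hfy⟩ := geometric_hahn_banach_closed_point hC hCc hcon
  obtain ⟨u, rfl⟩ := (InnerProductSpace.toDual ℝ E).surjective f
  simp only [InnerProductSpace.toDual_apply_apply] at hfC hfy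
  -- The unit vector in the direction of `u` (zero if `u = 0`) lies in the ball.
  have hν : ‖u‖ < y := by
    have h := hfC (‖u‖⁻¹ • u) (hball ?_)
    · rw [inner_smul_right, real_inner_self_eq_norm_sq] at h
      rcases eq_or_ne ‖u‖ 0 with h0 | h0
      · simpa [h0] using h
      · field_simp at h; exact h
    · rw [mem_closedBall_zero_iff, norm_smul, norm_inv, norm_norm]
      exact inv_mul_le_one
  have hdx : d * ⟪e, u⟫_ℝ < y := by
    have h := hfC _ hde
    rwa [inner_smul_right, real_inner_comm] at h
  have hx : |⟪e, u⟫_ℝ| ≤ ‖u‖ := by simpa [he] using abs_real_inner_le_norm e u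
  have hlt := support_le hx hs hs1 hd hβ (norm_stretch_sq he s β u) hν hdx
  rw [inner_add_right, inner_stretch, inner_smul_right, real_inner_comm e u] at hfy
  have h1 := real_inner_le_norm (stretch e s β u) v
  have h2 : ‖stretch e s β u‖ * ‖v‖ ≤ ‖stretch e s β u‖ :=
    mul_le_of_le_one_right (norm_nonneg _) hv
  linarith

/-- For `d > n` the parameters can be chosen so that the ellipsoid of `support_le` has larger
volume than the unit ball. -/
lemma exists_perturbation {n : ℕ} (hn : 1 ≤ n) {d : ℝ} (hd : (n : ℝ) < d) :
    ∃ s β : ℝ, 0 ≤ s ∧ s ≤ 1 ∧ 0 < β ∧ β ^ 2 = 1 - 2 * s / (d - 1) ∧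
      1 < β ^ (n - 1) * (1 + s) := by
  have hn' : (1 : ℝ) ≤ n := by exact_mod_cast hn
  have hd1 : 0 < d - 1 := by linarith
  set q : ℝ := (n - 1) / (d - 1) with hq
  have hq0 : 0 ≤ q := div_nonneg (by linarith) hd1.le
  have hq1 : q < 1 := by rw [hq, div_lt_one hd1]; linarith
  set s : ℝ := min ((1 - q) / 6) ((d - 1) / 4) with hs
  have hs0 : 0 < s := lt_min (by linarith) (by linarith)
  have hsq : s ≤ (1 - q) / 6 := min_le_left _ _
  have hsd : 2 * s / (d - 1) ≤ 1 / 2 := by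
    rw [div_le_iff₀ hd1]
    linarith [min_le_right ((1 - q) / 6) ((d - 1) / 4)]
  have hpos : 0 < 1 - 2 * s / (d - 1) := by linarith
  refine ⟨s, √(1 - 2 * s / (d - 1)), hs0.le, by linarith, Real.sqrt_pos.2 hpos,
    Real.sq_sqrt hpos.le, ?_⟩
  -- It suffices to bound the square; Bernoulli's inequality linearises the power.
  have hb : 1 - 2 * s * q ≤ (1 - 2 * s / (d - 1)) ^ (n - 1) := by
    have h := one_add_mul_le_pow (a := -(2 * s / (d - 1))) (by linarith) (n - 1)
    rw [Nat.cast_sub hn, Nat.cast_one] at h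
    calc 1 - 2 * s * q = 1 + ((n : ℝ) - 1) * -(2 * s / (d - 1)) := by rw [hq]; ring
      _ ≤ _ := h
  have hsq1 : 1 < (1 - 2 * s * q) * (1 + s) ^ 2 := by
    have h1 : s * q ≤ s := by nlinarith
    have h2 : s * (s * q) ≤ s * s := by nlinarith
    have h3 : s * (6 * s) ≤ s * (1 - q) := by nlinarith
    have h4 : s * s * (s * q) ≤ s * s * 1 := by
      apply mul_le_mul_of_nonneg_left _ (by positivity); nlinarith
    have h5 : 0 < s * (1 - q) := mul_pos hs0 (by linarith)
    nlinarith
  rw [← one_lt_sq_iff₀ (by positivity), mul_pow, ← pow_mul, mul_comm (n - 1), pow_mul,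
    Real.sq_sqrt hpos.le]
  exact hsq1.trans_le (mul_le_mul_of_nonneg_right hb (by positivity))

/-- John's theorem: some ellipsoid `T B + c` in the convex body `K` satisfies
`K ⊆ n • T B + c`, where `B` is the unit ball and `n` the dimension. -/
theorem john_ellipsoid [FiniteDimensional ℝ E] (hn : 1 ≤ finrank ℝ E) {K : Set E}
    (hK : IsCompact K) (hKc : Convex ℝ K) (hKi : (interior K).Nonempty) :
    ∃ (T : E ≃ₗ[ℝ] E) (c : E), (∀ v, ‖v‖ ≤ 1 → T v + c ∈ K) ∧
      ∀ p, T p + c ∈ K → ‖p‖ ≤ finrank ℝ E := by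
  set S : Set ((E →L[ℝ] E) × E) := {P | ∀ v, ‖v‖ ≤ 1 → P.1 v + P.2 ∈ K} with hS
  have hclosed : IsClosed S := by
    simp only [hS, Set.ofPred_forall]
    refine isClosed_iInter fun v => isClosed_iInter fun _ => hK.isClosed.preimage ?_
    fun_prop
  obtain ⟨R, hR⟩ := hK.isBounded.exists_norm_le
  have hbdd : Bornology.IsBounded S := by
    refine isBounded_iff_forall_norm_le.2 ⟨2 * R, ?_⟩
    rintro ⟨T, c⟩ h
    have hc : ‖c‖ ≤ R := by simpa using hR _ (h 0 (by simp))
    have hR0 : 0 ≤ R := (norm_nonneg c).trans hc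
    refine max_le ?_ (hc.trans (by linarith))
    refine T.opNorm_le_of_unit_norm (by positivity) fun v hv => ?_
    have h1 := hR _ (h v hv.le)
    have h2 := norm_sub_le (T v + c) c
    rw [add_sub_cancel_right] at h2
    linarith
  have : ProperSpace (E →L[ℝ] E) := FiniteDimensional.proper ℝ _
  have : ProperSpace E := FiniteDimensional.proper ℝ _
  have hcomp : IsCompact S := Metric.isCompact_of_isClosed_isBounded hclosed hbdd
  have hcont : Continuous fun P : (E →L[ℝ] E) × E => |P.1.det| :=
    (ContinuousLinearMap.continuous_det.comp continuous_fst).abs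
  obtain ⟨c₁, hc₁⟩ := hKi
  obtain ⟨ε, hε, hεK⟩ := Metric.nhds_basis_closedBall.mem_iff.1 (mem_interior_iff_mem_nhds.1 hc₁)
  have hS₁ : (ε • ContinuousLinearMap.id ℝ E, c₁) ∈ S := by
    intro v hv
    apply hεK
    simp only [smul_apply, ContinuousLinearMap.id_apply, Metric.mem_closedBall,
      dist_eq_norm, add_sub_cancel_right, norm_smul, Real.norm_eq_abs, abs_of_pos hε]
    exact mul_le_of_le_one_right hε.le hv
  obtain ⟨⟨T, c⟩, hTS, hmax⟩ := hcomp.exists_isMaxOn ⟨_, hS₁⟩ hcont.continuousOn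
  have hdet : 0 < |T.det| := by
    refine lt_of_lt_of_le ?_ (hmax hS₁)
    have : (ε • ContinuousLinearMap.id ℝ E).det = ε ^ finrank ℝ E := by
      simp [ContinuousLinearMap.det]
    simp only [this]
    positivity
  refine ⟨(T : E →ₗ[ℝ] E).equivOfDetNeZero (abs_pos.1 hdet), c, fun v hv => hTS v hv, ?_⟩
  intro p hp
  by_contra! hlt
  obtain ⟨s, β, hs, hs1, hβ0, hβ, hvol⟩ := exists_perturbation hn hlt
  have hd : 1 < ‖p‖ := lt_of_le_of_lt (by exact_mod_cast hn) hlt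
  set e : E := ‖p‖⁻¹ • p with he'
  have hp0 : ‖p‖ ≠ 0 := by positivity
  have he : ‖e‖ = 1 := by rw [he', norm_smul, norm_inv, norm_norm, inv_mul_cancel₀ hp0]
  have hpe : ‖p‖ • e = p := by rw [he', smul_smul, mul_inv_cancel₀ hp0, one_smul]
  set C : Set E := {x | T x + c ∈ K} with hC
  have hCconv : Convex ℝ C := by
    intro x hx y hy a b ha hb hab
    have := hKc hx hy ha hb hab
    have h : T (a • x + b • y) + c = a • (T x + c) + b • (T y + c) := by
      rw [map_add, map_smul, map_smul, smul_add, smul_add, add_add_add_comm, ← add_smul, hab,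
        one_smul]
    rwa [hC, Set.mem_ofPred_eq, h]
  have hCclosed : IsClosed C := hK.isClosed.preimage (by fun_prop)
  have hS₂ : (T.comp (stretch e s β), T (s • e) + c) ∈ S := by
    intro v hv
    have h : stretch e s β v + s • e ∈ C :=
      ellipsoid_mem hCconv hCclosed (fun x hx => hTS x (mem_closedBall_zero_iff.1 hx)) he
        (d := ‖p‖) (by rw [hpe]; exact hp) hs hs1 hd hβ hv
    rw [hC, Set.mem_ofPred_eq, map_add, add_assoc] at h
    exact h
  have hle := hmax hS₂
  have hcompdet : (T.comp (stretch e s β)).det = T.det * (stretch e s β).det := by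
    simp [ContinuousLinearMap.det, LinearMap.det_comp]
  have hds : (stretch e s β).det = β ^ (finrank ℝ E - 1) * (1 + s) := by
    have h := det_stretch he s hβ0.ne'
    rw [← Nat.sub_add_cancel hn, pow_succ] at h
    apply mul_right_cancel₀ hβ0.ne'
    rw [h]; ring
  simp only [Set.mem_ofPred_eq, hcompdet, hds] at hle
  rw [abs_mul, abs_of_pos (zero_lt_one.trans hvol)] at hle
  nlinarith

end John

/-! ### The position -/

theorem john_position (n : ℕ) (K : Set (EuclideanSpace ℝ (Fin n)))
    (hKcomp : IsCompact K) (hKconv : Convex ℝ K) (hKint : (interior K).Nonempty)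
    (hb : barycenter n K = 0) :
    ∃ (A : EuclideanSpace ℝ (Fin n) ≃ₗ[ℝ] EuclideanSpace ℝ (Fin n)) (r : ℝ)
      (a : EuclideanSpace ℝ (Fin n)), 0 < r ∧ a ∈ A '' K ∧
      Metric.closedBall a r ⊆ A '' K ∧
      A '' K ⊆ Metric.closedBall 0 (2 * n * r) ∧
      {y : EuclideanSpace ℝ (Fin n) | ∀ x ∈ A '' K, ⟪x, y⟫_ℝ ≤ 1}
        ⊆ Metric.closedBall 0 (2 * n / r) := by
  rcases Nat.eq_zero_or_pos n with rfl | hn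
  · -- In dimension zero the space is a single point.
    have hK0 : (0 : EuclideanSpace ℝ (Fin 0)) ∈ K := by
      obtain ⟨x, hx⟩ := hKint
      rw [Subsingleton.elim 0 x]; exact interior_subset hx
    refine ⟨LinearEquiv.refl ℝ _, 1, 0, one_pos, ⟨0, hK0, rfl⟩, ?_, ?_, ?_⟩
    · intro x _
      exact ⟨0, hK0, Subsingleton.elim _ _⟩
    · intro x _
      simp [Subsingleton.elim x 0]
    · intro x _
      simp [Subsingleton.elim x 0]
  have hfr : finrank ℝ (EuclideanSpace ℝ (Fin n)) = n := by simp
  have hn' : (1 : ℝ) ≤ n := by exact_mod_cast hn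
  have hμ : 0 < (volume : Measure (EuclideanSpace ℝ (Fin n))).real K :=
    ENNReal.toReal_pos (Measure.measure_pos_of_nonempty_interior _ hKint).ne'
      hKcomp.measure_lt_top.ne
  have hint : ∫ x in K, x = 0 :=
    (smul_eq_zero.1 hb).resolve_left (inv_ne_zero hμ.ne')
  have h0K : (0 : EuclideanSpace ℝ (Fin n)) ∈ K := by
    have h := hKconv.set_average_mem (μ := volume) (t := K) (f := fun x => x) hKcomp.isClosed
      (Measure.measure_pos_of_nonempty_interior _ hKint).ne' hKcomp.measure_lt_top.ne
      (ae_restrict_mem hKcomp.measurableSet) (continuousOn_id.integrableOn_compact hKcomp)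
    rwa [setAverage_eq, hint, smul_zero] at h
  obtain ⟨T, c, hin, hout⟩ := john_ellipsoid (by rw [hfr]; exact hn) hKcomp hKconv hKint
  rw [hfr] at hout
  set a := T.symm c with ha
  have hTa : T a = c := by simp [ha]
  have hball : ∀ v, ‖v‖ ≤ 1 → a + v ∈ T.symm '' K := fun v hv =>
    ⟨T v + c, hin v hv, by rw [map_add, T.symm_apply_apply, add_comm]⟩
  have hdist : ∀ x ∈ K, ‖T.symm x - a‖ ≤ n := fun x hx =>
    hout _ (by rw [map_sub, T.apply_symm_apply, hTa, sub_add_cancel]; exact hx)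
  have hna : ‖a‖ ≤ n := by simpa using hdist 0 h0K
  refine ⟨T.symm, 1, a, one_pos, by simpa using hball 0 (by simp), ?_, ?_, ?_⟩
  · intro x hx
    have := hball (x - a) (by rwa [← dist_eq_norm])
    rwa [add_sub_cancel] at this
  · rintro _ ⟨x, hx, rfl⟩
    rw [mem_closedBall_zero_iff]
    have h1 := hdist x hx
    have h2 := norm_add_le (T.symm x - a) a
    rw [sub_add_cancel] at h2
    linarith
  · intro y hy
    rw [mem_closedBall_zero_iff, div_one]
    set f : EuclideanSpace ℝ (Fin n) →L[ℝ] ℝ :=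
      (innerSL ℝ y).comp (T.symm.toContinuousLinearEquiv : _ →L[ℝ] _) with hf
    have hfx : ∀ x, f x = ⟪T.symm x, y⟫_ℝ := fun x => by
      rw [real_inner_comm]; rfl
    have hf1 : ∀ x ∈ K, f x ≤ 1 := fun x hx => by
      rw [hfx]; exact hy _ ⟨x, hx, rfl⟩
    have hlow : ∀ z ∈ T.symm '' K, -(n : ℝ) ≤ ⟪z, y⟫_ℝ := by
      rintro _ ⟨x, hx, rfl⟩
      have := neg_finrank_le_of_le_one volume hKcomp hKconv hμ hint f hf1 hx
      rwa [hfr, hfx] at this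
    have hu : ‖‖y‖⁻¹ • y‖ ≤ 1 := by
      rw [norm_smul, norm_inv, norm_norm]; exact inv_mul_le_one
    have huy : ⟪‖y‖⁻¹ • y, y⟫_ℝ = ‖y‖ := by
      rw [inner_smul_left, real_inner_self_eq_norm_sq, conj_trivial, sq, ← mul_assoc]
      rcases eq_or_ne ‖y‖ 0 with h0 | h0
      · simp [h0]
      · rw [inv_mul_cancel₀ h0, one_mul]
    have h1 := hy _ (hball _ hu)
    have h2 := hlow _ (hball (-(‖y‖⁻¹ • y)) (by rwa [norm_neg]))
    rw [inner_add_left, huy] at h1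
    rw [inner_add_left, inner_neg_left, huy] at h2
    linarith
end

section
/- Suppose every symmetric convex body L ⊂ ℝⁿ satisfies n! |L| |L°| ≥ cⁿ. Then every convex body K ⊂ ℝⁿ with barycenter at the origin satisfies n! |K| |K°| ≥ (c/2)ⁿ. (The proof uses the reflection body RK := conv(K ∪ −K), the Rogers–Shephard bound |RK| ≤ 2ⁿ|K|, and |(RK)°| ≤ |K°| since K ⊂ RK.) -/
open MeasureTheory
open scoped InnerProductSpace

/-!
The reflection body `L = conv (K ∪ -K)` is a symmetric convex body containing `K`, so `L° ⊆ K°`, and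
the statement follows from the symmetric case as soon as `|L| ≤ 2ⁿ |K|` (Rogers–Shephard) and
`|K°| < ∞`. The latter holds because the barycenter of a convex body is an interior point
(`zero_mem_interior_of_integral_eq_zero`), which makes `K°` bounded.

The Rogers–Shephard bound is proved with exponential weights. Write `‖·‖_K` for the gauge of `K`.
Layer cake gives `∫ exp (-‖x‖_K) dx = n! |K|` (`lintegral_exp_neg_gauge`; only the fact that the
constant is positive, finite and independent of `K` is used). By Tonelli and a translation,
`(n! |K|)² = ∫∫ exp (-‖x‖_K - ‖x - z‖_K) dx dz`. Every `z` splits as `z = a - b` with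
`‖a‖_K + ‖b‖_K ≤ ‖z‖_L`; substituting `x = a + u` and using subadditivity of the gauge, the inner
integral is at least `exp (-‖z‖_L) ∫ exp (-2 ‖u‖_K) du = exp (-‖z‖_L) 2⁻ⁿ n! |K|`. Integrating over
`z` yields `(n! |K|)² ≥ n! |L| · 2⁻ⁿ n! |K|`.
-/

namespace MahlerReflection

open Set Pointwise Topology ENNReal

/-! ### Exponential moments -/

/-- The universal constant `∫₀^∞ e^{-s} sⁿ ds` (that is, `n!`) as an extended nonnegative real. -/
noncomputable def expMoment (n : ℕ) : ℝ≥0∞ :=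
  ∫⁻ s in Ioi (0 : ℝ), ENNReal.ofReal (Real.exp (-s)) * ENNReal.ofReal (s ^ n)

lemma expMoment_ne_top (n : ℕ) : expMoment n ≠ ∞ := by
  have h := Real.GammaIntegral_convergent (s := (n : ℝ) + 1) (by positivity)
  have h2 := h.lintegral_lt_top
  refine ne_of_lt (lt_of_le_of_lt (le_of_eq ?_) h2)
  refine setLIntegral_congr_fun measurableSet_Ioi fun s _ => ?_
  simp only [add_sub_cancel_right, Real.rpow_natCast]
  rw [ENNReal.ofReal_mul (Real.exp_pos _).le]

lemma expMoment_ne_zero (n : ℕ) : expMoment n ≠ 0 := by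
  unfold expMoment
  refine (setLIntegral_pos_iff (by fun_prop)).2 ?_ |>.ne'
  have : Ioi (0 : ℝ) ⊆ Function.support
      (fun s => ENNReal.ofReal (Real.exp (-s)) * ENNReal.ofReal (s ^ n)) ∩ Ioi 0 := by
    intro s hs
    have hs' : 0 < s := hs
    refine ⟨?_, hs⟩
    have h1 : 0 < ENNReal.ofReal (Real.exp (-s)) := ENNReal.ofReal_pos.2 (Real.exp_pos _)
    have h2 : 0 < ENNReal.ofReal (s ^ n) := ENNReal.ofReal_pos.2 (by positivity)
    exact (ENNReal.mul_pos h1.ne' h2.ne').ne'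
  refine lt_of_lt_of_le ?_ (measure_mono this)
  simp

lemma lintegral_exp_neg_Ici {g : ℝ} :
    ∫⁻ s in Ici g, ENNReal.ofReal (Real.exp (-s)) = ENNReal.ofReal (Real.exp (-g)) := by
  rw [setLIntegral_congr Ioi_ae_eq_Ici.symm, ← integral_exp_neg_Ioi g,
    ofReal_integral_eq_lintegral_ofReal (integrableOn_exp_neg_Ioi g)
      (Filter.Eventually.of_forall fun s => (Real.exp_pos _).le)]

/-! ### Total mass of exponential gauge weights -/

variable {n : ℕ} {K : Set (EuclideanSpace ℝ (Fin n))}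

lemma gauge_le_iff (hK : IsClosed K) (hc : Convex ℝ K) (h0 : K ∈ 𝓝 0) {s : ℝ} (hs : 0 < s)
    (x : EuclideanSpace ℝ (Fin n)) : gauge K x ≤ s ↔ x ∈ s • K := by
  constructor
  · intro h
    rw [mem_smul_set_iff_inv_smul_mem₀ hs.ne']
    have : s⁻¹ • x ∈ closure K := by
      rw [← gauge_le_one_iff_mem_closure hc h0, gauge_smul_of_nonneg (inv_nonneg.2 hs.le),
        smul_eq_mul, inv_mul_le_iff₀ hs]
      simpa using h
    rwa [hK.closure_eq] at this
  · exact gauge_le_of_mem hs.le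

/-- Layer-cake formula: the weight `exp (-‖·‖_K)` has total mass proportional to the volume of `K`,
because its superlevel sets are dilates of `K`. -/
lemma lintegral_exp_neg_gauge (hK : IsClosed K) (hc : Convex ℝ K) (h0 : K ∈ 𝓝 0) :
    ∫⁻ x, ENNReal.ofReal (Real.exp (-gauge K x)) = expMoment n * volume K := by
  have hg : Continuous (gauge K) := continuous_gauge hc h0
  have hset : MeasurableSet {p : EuclideanSpace ℝ (Fin n) × ℝ | gauge K p.1 ≤ p.2} :=
    measurableSet_le (hg.measurable.comp measurable_fst) measurable_snd
  have hmeas : Measurable (fun p : EuclideanSpace ℝ (Fin n) × ℝ =>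
      {p : EuclideanSpace ℝ (Fin n) × ℝ | gauge K p.1 ≤ p.2}.indicator
        (fun p => ENNReal.ofReal (Real.exp (-p.2))) p) :=
    Measurable.indicator (by fun_prop) hset
  calc ∫⁻ x, ENNReal.ofReal (Real.exp (-gauge K x))
      = ∫⁻ x, ∫⁻ s in Ioi (0 : ℝ),
          {p : EuclideanSpace ℝ (Fin n) × ℝ | gauge K p.1 ≤ p.2}.indicator
            (fun p => ENNReal.ofReal (Real.exp (-p.2))) (x, s) := by
        refine lintegral_congr fun x => ?_
        have : ∀ s : ℝ, {p : EuclideanSpace ℝ (Fin n) × ℝ | gauge K p.1 ≤ p.2}.indicator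
            (fun p => ENNReal.ofReal (Real.exp (-p.2))) (x, s) =
            (Ici (gauge K x)).indicator (fun s => ENNReal.ofReal (Real.exp (-s))) s := by
          intro s
          simp [indicator]
        simp_rw [this]
        rw [setLIntegral_congr Ioi_ae_eq_Ici, setLIntegral_indicator measurableSet_Ici,
          inter_eq_left.2 (Ici_subset_Ici.2 (gauge_nonneg x)), lintegral_exp_neg_Ici]
    _ = ∫⁻ s in Ioi (0 : ℝ), ∫⁻ x,
          {p : EuclideanSpace ℝ (Fin n) × ℝ | gauge K p.1 ≤ p.2}.indicator
            (fun p => ENNReal.ofReal (Real.exp (-p.2))) (x, s) :=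
        lintegral_lintegral_swap hmeas.aemeasurable
    _ = ∫⁻ s in Ioi (0 : ℝ),
          ENNReal.ofReal (Real.exp (-s)) * ENNReal.ofReal (s ^ n) * volume K := by
        refine setLIntegral_congr_fun measurableSet_Ioi fun s hs => ?_
        have hs' : 0 < s := hs
        have : ∀ x, {p : EuclideanSpace ℝ (Fin n) × ℝ | gauge K p.1 ≤ p.2}.indicator
            (fun p => ENNReal.ofReal (Real.exp (-p.2))) (x, s) =
            (s • K).indicator (fun _ => ENNReal.ofReal (Real.exp (-s))) x := by
          intro x
          have hi := gauge_le_iff hK hc h0 hs' x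
          by_cases hx : x ∈ s • K
          · simp [indicator, hx, hi.2 hx]
          · simp [indicator, hx, mt hi.1 hx]
        simp_rw [this]
        rw [lintegral_indicator (hK.smul₀ s).measurableSet, setLIntegral_const,
          Measure.addHaar_smul_of_nonneg _ hs'.le, finrank_euclideanSpace_fin, mul_assoc]
    _ = expMoment n * volume K := by
        rw [lintegral_mul_const _ (by fun_prop)]; rfl

lemma lintegral_exp_neg_two_gauge (hK : IsClosed K) (hc : Convex ℝ K) (h0 : K ∈ 𝓝 0) :
    ∫⁻ x, ENNReal.ofReal (Real.exp (-(2 * gauge K x))) =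
      expMoment n * (ENNReal.ofReal ((1 / 2) ^ n) * volume K) := by
  -- `2 ‖·‖_K` is the gauge of `K / 2`.
  have h := lintegral_exp_neg_gauge (hK.smul₀ (1 / 2 : ℝ)) (hc.smul (1 / 2 : ℝ))
    ((set_smul_mem_nhds_zero_iff (by norm_num : (1 / 2 : ℝ) ≠ 0)).2 h0)
  rw [Measure.addHaar_smul_of_nonneg _ (by norm_num), finrank_euclideanSpace_fin] at h
  rw [← h]
  refine lintegral_congr fun x => ?_
  rw [gauge_smul_left_of_nonneg (by norm_num : (0 : ℝ) ≤ 1 / 2)]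
  simp

/-! ### The reflection body -/

/-- The reflection body `conv (K ∪ -K)` of a convex set `K`, written as the union of all segments
joining `K` to `-K`. -/
def reflectionBody (K : Set (EuclideanSpace ℝ (Fin n))) : Set (EuclideanSpace ℝ (Fin n)) :=
  convexJoin ℝ K (-K)

lemma reflectionBody_convex (hc : Convex ℝ K) : Convex ℝ (reflectionBody K) :=
  hc.convexJoin hc.neg

lemma subset_reflectionBody (hne : K.Nonempty) : K ⊆ reflectionBody K :=
  subset_convexJoin_left hne.neg

lemma reflectionBody_neg : reflectionBody K = -reflectionBody K := by
  have key : ∀ x ∈ reflectionBody K, -x ∈ reflectionBody K := by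
    intro x hx
    obtain ⟨a, ha, b, hb, α, β, hα, hβ, hαβ, rfl⟩ := mem_convexJoin.1 hx
    refine mem_convexJoin.2 ⟨-b, hb, -a, by simpa using ha, β, α, hβ, hα, by linarith, ?_⟩
    simp only [smul_neg]
    abel
  refine Subset.antisymm (fun x hx => key x hx) fun x hx => ?_
  simpa using key _ hx

lemma reflectionBody_isCompact (hK : IsCompact K) : IsCompact (reflectionBody K) := by
  have h : reflectionBody K = (fun p : EuclideanSpace ℝ (Fin n) × EuclideanSpace ℝ (Fin n) × ℝ =>
      p.1 + p.2.2 • (p.2.1 - p.1)) '' (K ×ˢ ((-K) ×ˢ Icc (0 : ℝ) 1)) := by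
    ext x
    simp only [reflectionBody, mem_convexJoin, segment_eq_image', mem_image, mem_prod,
      Prod.exists]
    constructor
    · rintro ⟨a, ha, b, hb, t, ht, rfl⟩
      exact ⟨a, b, t, ⟨ha, hb, ht⟩, rfl⟩
    · rintro ⟨a, b, t, ⟨ha, hb, ht⟩, rfl⟩
      exact ⟨a, ha, b, hb, t, ht, rfl⟩
  rw [h]
  exact (hK.prod (hK.neg.prod isCompact_Icc)).image (by fun_prop)

/-- The gauge of the reflection body dominates the infimal convolution of the gauges of `K` and
`-K`. -/
lemma exists_sub_gauge_le (hK : IsCompact K) (hc : Convex ℝ K) (h0 : K ∈ 𝓝 0)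
    (z : EuclideanSpace ℝ (Fin n)) :
    ∃ a b, z = a - b ∧ gauge K a + gauge K b ≤ gauge (reflectionBody K) z := by
  have hL := reflectionBody_isCompact hK
  have hne : K.Nonempty := ⟨0, mem_of_mem_nhds h0⟩
  have hL0 : reflectionBody K ∈ 𝓝 0 := Filter.mem_of_superset h0 (subset_reflectionBody hne)
  rcases (gauge_nonneg (s := reflectionBody K) z).eq_or_lt with hr | hr
  · have hz : z = 0 := (gauge_eq_zero (absorbent_nhds_zero hL0)
      (NormedSpace.isVonNBounded_of_isBounded ℝ hL.isBounded)).1 hr.symm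
    exact ⟨0, 0, by simp [hz], by simp [hz]⟩
  · obtain ⟨w, hw, hwz⟩ :=
      (gauge_le_iff hL.isClosed (reflectionBody_convex hc) hL0 hr z).1 le_rfl
    obtain ⟨k, hk, m, hm, α, β, hα, hβ, hαβ, rfl⟩ := mem_convexJoin.1 hw
    set r := gauge (reflectionBody K) z
    refine ⟨(r * α) • k, (r * β) • (-m), ?_, ?_⟩
    · rw [← hwz]
      simp only [smul_add, smul_smul, smul_neg, sub_neg_eq_add]
    · have h1 : gauge K ((r * α) • k) ≤ r * α :=
        gauge_le_of_mem (by positivity) (smul_mem_smul_set hk)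
      have h2 : gauge K ((r * β) • (-m)) ≤ r * β :=
        gauge_le_of_mem (by positivity) (smul_mem_smul_set hm)
      have : r * α + r * β = r := by rw [← mul_add, hαβ, mul_one]
      linarith

/-! ### The Rogers–Shephard inequality -/

/-- The Rogers–Shephard inequality for the reflection body. -/
lemma volume_reflectionBody_le (hK : IsCompact K) (hc : Convex ℝ K) (h0 : K ∈ 𝓝 0) :
    volume (reflectionBody K) ≤ 2 ^ n * volume K := by
  have hL := reflectionBody_isCompact hK
  have hne : K.Nonempty := ⟨0, mem_of_mem_nhds h0⟩
  have hL0 : reflectionBody K ∈ 𝓝 0 := Filter.mem_of_superset h0 (subset_reflectionBody hne)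
  have hA := lintegral_exp_neg_gauge hK.isClosed hc h0
  have hA2 := lintegral_exp_neg_two_gauge hK.isClosed hc h0
  have hAL := lintegral_exp_neg_gauge hL.isClosed (reflectionBody_convex hc) hL0
  have hgm : Measurable (gauge K) := (continuous_gauge hc h0).measurable
  set φ : EuclideanSpace ℝ (Fin n) → ℝ≥0∞ := fun x => ENNReal.ofReal (Real.exp (-gauge K x))
    with hφ
  have hφm : Measurable φ := by fun_prop
  set C := expMoment n
  have hsq : (C * volume K) * (C * volume K) = ∫⁻ z, ∫⁻ x, φ x * φ (x - z) := by
    rw [lintegral_lintegral_swap (by fun_prop)]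
    have : ∀ x, ∫⁻ z, φ x * φ (x - z) = φ x * (C * volume K) := by
      intro x
      rw [lintegral_const_mul _ (by fun_prop), lintegral_sub_left_eq_self φ x, hA]
    simp_rw [this]
    rw [lintegral_mul_const _ hφm, hA]
  have hlow : ∀ z, ENNReal.ofReal (Real.exp (-gauge (reflectionBody K) z)) *
      (C * (ENNReal.ofReal ((1 / 2) ^ n) * volume K)) ≤ ∫⁻ x, φ x * φ (x - z) := by
    intro z
    obtain ⟨a, b, rfl, hab⟩ := exists_sub_gauge_le hK hc h0 z
    rw [← hA2, ← lintegral_const_mul _ (by fun_prop),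
      ← lintegral_add_left_eq_self (fun x => φ x * φ (x - (a - b))) a]
    refine lintegral_mono fun u => ?_
    have e : a + u - (a - b) = b + u := by abel
    simp only [hφ, e]
    rw [← ENNReal.ofReal_mul (Real.exp_pos _).le, ← ENNReal.ofReal_mul (Real.exp_pos _).le,
      ← Real.exp_add, ← Real.exp_add]
    refine ENNReal.ofReal_le_ofReal (Real.exp_le_exp.2 ?_)
    have h1 := gauge_add_le hc (absorbent_nhds_zero h0) a u
    have h2 := gauge_add_le hc (absorbent_nhds_zero h0) b u
    linarith
  have hmain : (C * volume (reflectionBody K)) * (C * (ENNReal.ofReal ((1 / 2) ^ n) * volume K)) ≤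
      (C * volume K) * (C * volume K) := by
    rw [hsq, ← hAL, ← lintegral_mul_const _ ?_]
    · exact lintegral_mono hlow
    · have := (continuous_gauge (reflectionBody_convex hc) hL0).measurable
      fun_prop
  have hC0 : C ≠ 0 := expMoment_ne_zero n
  have hCt : C ≠ ∞ := expMoment_ne_top n
  have hV0 : volume K ≠ 0 := (Measure.measure_pos_of_mem_nhds _ h0).ne'
  have hVt : volume K ≠ ∞ := hK.measure_lt_top.ne
  set D := C * (C * volume K) with hD
  have hD0 : D ≠ 0 := by simp [hD, hC0, hV0]
  have hDt : D ≠ ∞ := by simp [hD, ENNReal.mul_eq_top, hCt, hVt]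
  have h3 : D * (ENNReal.ofReal ((1 / 2) ^ n) * volume (reflectionBody K)) ≤ D * volume K := by
    convert hmain using 1 <;> rw [hD] <;> ring
  have h4 := (ENNReal.mul_le_mul_iff_right hD0 hDt).1 h3
  have h5 : (2 : ℝ≥0∞) ^ n * ENNReal.ofReal ((1 / 2) ^ n) = 1 := by
    rw [ENNReal.ofReal_pow (by norm_num), ← mul_pow, one_div,
      ENNReal.ofReal_inv_of_pos (by norm_num), ENNReal.ofReal_ofNat,
      ENNReal.mul_inv_cancel (by norm_num) (by norm_num), one_pow]
  calc volume (reflectionBody K)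
      = 2 ^ n * (ENNReal.ofReal ((1 / 2) ^ n) * volume (reflectionBody K)) := by
        rw [← mul_assoc, h5, one_mul]
    _ ≤ 2 ^ n * volume K := by gcongr

/-! ### Barycenter and polar body -/

/-- The barycenter of a convex body is an interior point: otherwise a hyperplane through it supports
the body, and a linear functional that is negative on the interior would have integral zero. -/
lemma zero_mem_interior_of_integral_eq_zero (hK : IsCompact K) (hc : Convex ℝ K)
    (hint : (interior K).Nonempty) (hb : ∫ x in K, x = 0) : 0 ∈ interior K := by
  by_contra h
  obtain ⟨f, hf⟩ := geometric_hahn_banach_open_point hc.interior isOpen_interior h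
  rw [map_zero] at hf
  have hle : ∀ x ∈ K, f x ≤ 0 := by
    intro x hx
    have hx' : x ∈ closure (interior K) := by
      rw [hc.closure_interior_eq_closure_of_nonempty_interior hint]
      exact subset_closure hx
    exact closure_minimal (fun y hy => (hf y hy).le) (isClosed_le f.continuous continuous_const) hx'
  have hfint : ∫ x in K, f x = 0 := by
    have hid : IntegrableOn (fun x : EuclideanSpace ℝ (Fin n) => x) K :=
      continuous_id.continuousOn.integrableOn_compact hK
    rw [f.integral_comp_comm hid, hb, map_zero]
  have hpos : 0 < ∫ x in K, -f x := by
    rw [setIntegral_pos_iff_support_of_nonneg_ae]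
    · refine lt_of_lt_of_le (isOpen_interior.measure_pos volume hint) (measure_mono ?_)
      intro x hx
      exact ⟨by simpa using (hf x hx).ne, interior_subset hx⟩
    · refine (ae_restrict_iff' hK.measurableSet).2 (Filter.Eventually.of_forall fun x hx => ?_)
      simpa using hle x hx
    · exact f.continuous.neg.continuousOn.integrableOn_compact hK
  rw [integral_neg, hfint, neg_zero] at hpos
  exact lt_irrefl _ hpos

/-- If `K` contains the ball of radius `r`, its polar lies in the ball of radius `1 / r`; finiteness
is needed for `ENNReal.toReal` to be monotone on the inclusion `L° ⊆ K°`. -/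
lemma volume_polar_lt_top (h0 : K ∈ 𝓝 0) :
    volume {y : EuclideanSpace ℝ (Fin n) | ∀ x ∈ K, ⟪x, y⟫_ℝ ≤ 1} < ∞ := by
  obtain ⟨r, hr, hrK⟩ := Metric.nhds_basis_closedBall.mem_iff.1 h0
  refine lt_of_le_of_lt (measure_mono (t := Metric.closedBall 0 r⁻¹) fun y hy => ?_)
    measure_closedBall_lt_top
  rw [mem_closedBall_zero_iff]
  rcases eq_or_ne y 0 with rfl | hy0
  · simpa using hr.le
  have hn : 0 < ‖y‖ := norm_pos_iff.2 hy0
  have hx : (r / ‖y‖) • y ∈ K := by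
    refine hrK (mem_closedBall_zero_iff.2 ?_)
    rw [norm_smul, Real.norm_of_nonneg (by positivity), div_mul_cancel₀ _ hn.ne']
  have h := hy _ hx
  rw [real_inner_smul_left, real_inner_self_eq_norm_sq] at h
  have e : r / ‖y‖ * ‖y‖ ^ 2 = r * ‖y‖ := by field_simp
  rw [e] at h
  rwa [← one_div, le_div_iff₀ hr, mul_comm]

end MahlerReflection

/-! ### From symmetric to centered bodies -/

open MahlerReflection in
theorem mahler_nonsymmetric_of_symmetric (n : ℕ) (c : ℝ)
    (hsym : ∀ L : Set (EuclideanSpace ℝ (Fin n)), IsCompact L → Convex ℝ L →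
      (interior L).Nonempty → L = -L →
      c ^ n ≤ (n.factorial : ℝ) * (volume L).toReal *
        (volume {y : EuclideanSpace ℝ (Fin n) | ∀ x ∈ L, ⟪x, y⟫_ℝ ≤ 1}).toReal)
    (K : Set (EuclideanSpace ℝ (Fin n)))
    (hKcomp : IsCompact K) (hKconv : Convex ℝ K) (hKint : (interior K).Nonempty)
    (hb : ((volume K).toReal)⁻¹ • (∫ x in K, x) = (0 : EuclideanSpace ℝ (Fin n))) :
    (c / 2) ^ n ≤ (n.factorial : ℝ) * (volume K).toReal *
      (volume {y : EuclideanSpace ℝ (Fin n) | ∀ x ∈ K, ⟪x, y⟫_ℝ ≤ 1}).toReal := by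
  have hVt : volume K ≠ ⊤ := hKcomp.measure_lt_top.ne
  have hV0 : volume K ≠ 0 :=
    ((isOpen_interior.measure_pos volume hKint).trans_le (measure_mono interior_subset)).ne'
  have hb' : ∫ x in K, x = 0 :=
    (smul_eq_zero.1 hb).resolve_left (inv_ne_zero (ENNReal.toReal_ne_zero.2 ⟨hV0, hVt⟩))
  have h0 : K ∈ nhds 0 :=
    mem_interior_iff_mem_nhds.1 (zero_mem_interior_of_integral_eq_zero hKcomp hKconv hKint hb')
  have hsub : K ⊆ reflectionBody K := subset_reflectionBody (hKint.mono interior_subset)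
  have h := hsym (reflectionBody K) (reflectionBody_isCompact hKcomp)
    (reflectionBody_convex hKconv) (hKint.mono (interior_mono hsub)) reflectionBody_neg
  have hvol : (volume (reflectionBody K)).toReal ≤ 2 ^ n * (volume K).toReal := by
    have := ENNReal.toReal_mono (ENNReal.mul_ne_top (by simp) hVt)
      (volume_reflectionBody_le hKcomp hKconv h0)
    simpa using this
  have hpol : (volume {y : EuclideanSpace ℝ (Fin n) | ∀ x ∈ reflectionBody K, ⟪x, y⟫_ℝ ≤ 1}).toReal
      ≤ (volume {y : EuclideanSpace ℝ (Fin n) | ∀ x ∈ K, ⟪x, y⟫_ℝ ≤ 1}).toReal :=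
    ENNReal.toReal_mono (volume_polar_lt_top h0).ne
      (measure_mono fun y hy x hx => hy x (hsub hx))
  rw [div_pow, div_le_iff₀ (by positivity)]
  calc c ^ n ≤ _ := h
    _ ≤ (n.factorial : ℝ) * (2 ^ n * (volume K).toReal) *
        (volume {y : EuclideanSpace ℝ (Fin n) | ∀ x ∈ K, ⟪x, y⟫_ℝ ≤ 1}).toReal := by gcongr
    _ = _ := by ring
end
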